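/- arXiv:2310.06853 — 2 statements merged into one kernel-verified Lean document; each statement's English description precedes it below -/
import Mathlib

section
/- Among the solutions of the Hopf system over the symplectic quandle V = (ZMod 5)², exactly 25 have image of cardinality 1, exactly 360 have image of cardinality 2, exactly 840 have image of cardinality 3, and no solution has image of cardinality 4 or more (i.e., the enhanced quandle counting polynomial is 25q + 360q² + 840q³). -/
/-!
The relation `x₁ = x₁ ▷ x₃` says `⟨x₁, x₃⟩ • x₃ = 0`, i.e. `⟨x₁, x₃⟩ = 0`; likewise `⟨x₄, x₃⟩ = 0`,
and then the first relation collapses to `x₂ = x₃`. So the solutions are exactly the tuples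
`(a, c, c, d)` with `a` and `d` in the orthogonal `c^⊥` (`hopfSys_iff`), and the image is
`{a, c, d}`, of size at most 3. For a fixed `c` with `|c^⊥| = n`, the number of pairs `(a, d)` giving
an image of size 1, 2, 3 is `1`, `3 (n - 1)`, `(n - 1) (n - 2)` respectively
(`card_pairs_one`, `card_pairs_two`, `card_pairs_three`). Since `n = 25` for `c = 0` and `n = 5` for
the 24 nonzero `c` (`card_perp`), summing over `c` gives `25`, `3 (24 + 24 * 4) = 360` and
`24 * 23 + 24 * 4 * 3 = 840`.
-/

abbrev V : Type := Fin 2 → ZMod 5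

def op (x y : V) : V := x + (x 0 * y 1 - x 1 * y 0) • y

def HopfSys (x : Fin 4 → V) : Prop :=
  x 1 = op (x 2) (x 0) ∧
  x 2 = op (x 1) (x 3) ∧
  x 0 = op (x 0) (x 2) ∧
  x 3 = op (x 3) (x 2)

/-- The orthogonal of `c` with respect to the symplectic form. -/
def perp (c : V) : Finset V := Finset.univ.filter fun a => a 0 * c 1 - a 1 * c 0 = 0

/-- The pairs `(a, d)` of elements of `S` for which `{a, c, d}` has exactly `k` elements. -/
def pairs (k : ℕ) (S : Finset V) (c : V) : Finset (V × V) :=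
  (S ×ˢ S).filter fun p => ({p.1, c, p.2} : Finset V).card = k

lemma mem_perp {a c : V} : a ∈ perp c ↔ a 0 * c 1 - a 1 * c 0 = 0 := by
  simp [perp]

lemma self_mem_perp (c : V) : c ∈ perp c := by
  rw [mem_perp]; ring

set_option maxRecDepth 100000 in
lemma card_perp (c : V) : (perp c).card = if c = 0 then 25 else 5 := by
  revert c
  decide +kernel

lemma eq_op_iff (a c : V) : a = op a c ↔ a ∈ perp c := by
  have : Fact (Nat.Prime 5) := ⟨by norm_num⟩
  rw [mem_perp, op, left_eq_add, smul_eq_zero]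
  refine ⟨?_, Or.inl⟩
  rintro (h | rfl)
  · exact h
  · simp

lemma op_eq_self {a c : V} (h : a ∈ perp c) : op c a = c := by
  rw [mem_perp] at h
  have h' : c 0 * a 1 - c 1 * a 0 = 0 := by linear_combination -h
  simp [op, h']

lemma hopfSys_iff (x : Fin 4 → V) :
    HopfSys x ↔ x 1 = x 2 ∧ x 0 ∈ perp (x 2) ∧ x 3 ∈ perp (x 2) := by
  unfold HopfSys
  rw [eq_op_iff, eq_op_iff]
  constructor
  · rintro ⟨h1, -, h3, h4⟩
    exact ⟨by rw [h1, op_eq_self h3], h3, h4⟩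
  · rintro ⟨h1, h3, h4⟩
    exact ⟨by rw [h1, op_eq_self h3], by rw [h1, op_eq_self h4], h3, h4⟩

lemma image_eq (x : Fin 4 → V) (h : x 1 = x 2) :
    Finset.image x Finset.univ = {x 0, x 2, x 3} := by
  ext v
  simp [Fin.exists_fin_succ, h, eq_comm]

/-- Solutions with image of size `k`, sorted by the value `c` of `x 2`. -/
def solEquiv (k : ℕ) :
    {x : Fin 4 → V // HopfSys x ∧ (Finset.image x Finset.univ).card = k} ≃
      Σ c : V, {p : V × V // p ∈ pairs k (perp c) c} where
  toFun x := ⟨x.1 2, (x.1 0, x.1 3), by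
    obtain ⟨x, hx, hk⟩ := x
    obtain ⟨h1, h3, h4⟩ := (hopfSys_iff x).1 hx
    rw [image_eq x h1] at hk
    simp [pairs, h3, h4, hk]⟩
  invFun s := ⟨![s.2.1.1, s.1, s.1, s.2.1.2], by
    obtain ⟨c, ⟨a, d⟩, h⟩ := s
    simp only [pairs, Finset.mem_filter, Finset.mem_product] at h
    refine ⟨(hopfSys_iff _).2 ⟨rfl, h.1.1, h.1.2⟩, ?_⟩
    rw [image_eq _ rfl]
    exact h.2⟩
  left_inv x := by
    obtain ⟨x, hx, hk⟩ := x
    have h1 := ((hopfSys_iff x).1 hx).1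
    apply Subtype.ext
    funext i
    fin_cases i <;> simp [h1]
  right_inv s := rfl

lemma card_sol (k : ℕ) :
    Nat.card {x : Fin 4 → V // HopfSys x ∧ (Finset.image x Finset.univ).card = k} =
      ∑ c : V, (pairs k (perp c) c).card := by
  rw [Nat.card_congr (solEquiv k), Nat.card_sigma]
  simp

lemma card_triple (a c d : V) : ({a, c, d} : Finset V).card =
    if a = c ∧ d = c then 1 else if a ≠ c ∧ d ≠ c ∧ a ≠ d then 3 else 2 := by
  by_cases h1 : a = c <;> by_cases h2 : d = c <;> by_cases h3 : a = d <;>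
    grind

lemma card_pairs_one {S : Finset V} {c : V} (hc : c ∈ S) : (pairs 1 S c).card = 1 := by
  rw [Finset.card_eq_one]
  refine ⟨(c, c), ?_⟩
  ext ⟨a, d⟩
  simp only [pairs, Finset.mem_filter, Finset.mem_product, card_triple, Finset.mem_singleton,
    Prod.mk.injEq]
  grind

lemma card_pairs_three {S : Finset V} {c : V} (hc : c ∈ S) :
    (pairs 3 S c).card = (S.card - 1) * (S.card - 1) - (S.card - 1) := by
  have : pairs 3 S c = (S.erase c).offDiag := by
    ext ⟨a, d⟩
    simp only [pairs, Finset.mem_filter, Finset.mem_product, card_triple, Finset.mem_offDiag,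
      Finset.mem_erase]
    grind
  rw [this, Finset.offDiag_card, Finset.card_erase_of_mem hc]

/-- The three families are `a = c ≠ d`, `d = c ≠ a` and `a = d ≠ c`. -/
lemma card_pairs_two {S : Finset V} {c : V} (hc : c ∈ S) :
    (pairs 2 S c).card = 3 * (S.card - 1) := by
  have : pairs 2 S c =
      (({c} ×ˢ S.erase c) ∪ (S.erase c ×ˢ {c})) ∪ (S.erase c).diag := by
    ext ⟨a, d⟩
    simp only [pairs, Finset.mem_filter, Finset.mem_product, card_triple, Finset.mem_union,
      Finset.mem_diag, Finset.mem_erase, Finset.mem_singleton]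
    grind
  rw [this, Finset.card_union_of_disjoint, Finset.card_union_of_disjoint, Finset.card_product,
    Finset.card_product, Finset.diag_card, Finset.card_erase_of_mem hc, Finset.card_singleton]
  · ring
  · rw [Finset.disjoint_left]
    rintro ⟨a, d⟩
    simp only [Finset.mem_product, Finset.mem_erase, Finset.mem_singleton]
    grind
  · rw [Finset.disjoint_left]
    rintro ⟨a, d⟩
    simp only [Finset.mem_product, Finset.mem_erase, Finset.mem_singleton, Finset.mem_union,
      Finset.mem_diag]
    grind

/-- The zero vector contributes `f 25`, each of the 24 nonzero vectors contributes `f 5`. -/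
lemma sum_card_perp (f : ℕ → ℕ) : ∑ c : V, f (perp c).card = f 25 + 24 * f 5 := by
  rw [← Finset.add_sum_erase _ _ (Finset.mem_univ (0 : V)), card_perp, if_pos rfl,
    Finset.sum_congr rfl (g := fun _ => f 5)]
  · simp [Finset.card_erase_of_mem]
  · intro c hc
    rw [card_perp, if_neg (Finset.ne_of_mem_erase hc)]

theorem hopf_enhanced_counts :
    Nat.card {x : Fin 4 → V // HopfSys x ∧ (Finset.image x Finset.univ).card = 1} = 25 ∧
    Nat.card {x : Fin 4 → V // HopfSys x ∧ (Finset.image x Finset.univ).card = 2} = 360 ∧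
    Nat.card {x : Fin 4 → V // HopfSys x ∧ (Finset.image x Finset.univ).card = 3} = 840 ∧
    ∀ x : Fin 4 → V, HopfSys x → (Finset.image x Finset.univ).card ≤ 3 := by
  refine ⟨?_, ?_, ?_, ?_⟩
  · rw [card_sol, Finset.sum_congr rfl fun c _ => card_pairs_one (self_mem_perp c),
      sum_card_perp fun _ => 1]
  · rw [card_sol, Finset.sum_congr rfl fun c _ => card_pairs_two (self_mem_perp c),
      sum_card_perp fun n => 3 * (n - 1)]
  · rw [card_sol, Finset.sum_congr rfl fun c _ => card_pairs_three (self_mem_perp c),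
      sum_card_perp fun n => (n - 1) * (n - 1) - (n - 1)]
  · intro x hx
    rw [image_eq x ((hopfSys_iff x).1 hx).1]
    exact Finset.card_le_three
end

section
/- Let V = (ZMod 5)² be the symplectic quandle. For every n ≥ 1 and every solution f1 of the L1 system over V, there exists a solution f_n of the L_n system over V whose image (the set of values taken by all its variables) equals the image of f1. -/
def L1Sys (x : Fin 45 → V) : Prop :=
  x 1 = op (x 0) (x 25) ∧
  x 25 = op (x 26) (x 0) ∧
  x 0 = op (x 1) (x 2) ∧
  x 2 = op (x 3) (x 0) ∧
  x 3 = op (x 4) (x 2) ∧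
  x 4 = op (x 5) (x 6) ∧
  x 7 = op (x 6) (x 5) ∧
  x 28 = op (x 27) (x 5) ∧
  x 2 = op (x 5) (x 27) ∧
  x 8 = op (x 7) (x 6) ∧
  x 6 = op (x 9) (x 8) ∧
  x 10 = op (x 8) (x 9) ∧
  x 9 = op (x 10) (x 11) ∧
  x 12 = op (x 1) (x 3) ∧
  x 11 = op (x 13) (x 12) ∧
  x 18 = op (x 14) (x 13) ∧
  x 21 = op (x 14) (x 12) ∧
  x 19 = op (x 15) (x 13) ∧
  x 20 = op (x 15) (x 12) ∧
  x 13 = op (x 16) (x 20) ∧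
  x 12 = op (x 17) (x 20) ∧
  x 19 = op (x 16) (x 21) ∧
  x 18 = op (x 17) (x 21) ∧
  x 20 = op (x 22) (x 19) ∧
  x 21 = op (x 23) (x 19) ∧
  x 25 = op (x 22) (x 18) ∧
  x 24 = op (x 23) (x 18) ∧
  x 29 = op (x 27) (x 28) ∧
  x 28 = op (x 30) (x 29) ∧
  x 31 = op (x 29) (x 30) ∧
  x 30 = op (x 32) (x 31) ∧
  x 33 = op (x 31) (x 32) ∧
  x 32 = op (x 34) (x 33) ∧
  x 39 = op (x 35) (x 34) ∧
  x 37 = op (x 35) (x 33) ∧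
  x 40 = op (x 36) (x 34) ∧
  x 38 = op (x 36) (x 33) ∧
  x 34 = op (x 41) (x 38) ∧
  x 33 = op (x 42) (x 38) ∧
  x 40 = op (x 41) (x 37) ∧
  x 39 = op (x 42) (x 37) ∧
  x 24 = op (x 43) (x 39) ∧
  x 38 = op (x 43) (x 40) ∧
  x 26 = op (x 44) (x 39) ∧
  x 37 = op (x 44) (x 40)

def L1Mod (x : Fin 45 → V) (a2 b2 : V) : Prop :=
  x 1 = op (x 0) (x 25) ∧
  x 25 = op (x 26) (x 0) ∧
  x 0 = op (x 1) (x 2) ∧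
  x 2 = op (x 3) (x 0) ∧
  x 3 = op (x 4) (x 2) ∧
  x 4 = op (x 5) (x 6) ∧
  x 7 = op (x 6) (x 5) ∧
  x 28 = op (x 27) (x 5) ∧
  a2 = op (x 5) (x 27) ∧
  x 8 = op (x 7) (x 6) ∧
  x 6 = op (x 9) (x 8) ∧
  x 10 = op (x 8) (x 9) ∧
  x 9 = op (x 10) (x 11) ∧
  x 12 = op (x 1) (x 3) ∧
  x 11 = op (x 13) (x 12) ∧
  x 18 = op (x 14) (x 13) ∧
  x 21 = op (x 14) (x 12) ∧
  x 19 = op (x 15) (x 13) ∧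
  x 20 = op (x 15) (x 12) ∧
  x 13 = op (x 16) (x 20) ∧
  x 12 = op (x 17) (x 20) ∧
  x 19 = op (x 16) (x 21) ∧
  x 18 = op (x 17) (x 21) ∧
  x 20 = op (x 22) (x 19) ∧
  x 21 = op (x 23) (x 19) ∧
  x 25 = op (x 22) (x 18) ∧
  x 24 = op (x 23) (x 18) ∧
  x 29 = op (x 27) (x 28) ∧
  x 28 = op (x 30) (x 29) ∧
  x 31 = op (x 29) (x 30) ∧
  x 30 = op (x 32) (x 31) ∧
  x 33 = op (x 31) (x 32) ∧
  x 32 = op (x 34) (x 33) ∧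
  x 39 = op (x 35) (x 34) ∧
  x 37 = op (x 35) (x 33) ∧
  x 40 = op (x 36) (x 34) ∧
  x 38 = op (x 36) (x 33) ∧
  x 34 = op (x 41) (x 38) ∧
  x 33 = op (x 42) (x 38) ∧
  x 40 = op (x 41) (x 37) ∧
  x 39 = op (x 42) (x 37) ∧
  x 24 = op (x 43) (x 39) ∧
  x 38 = op (x 43) (x 40) ∧
  b2 = op (x 44) (x 39) ∧
  x 37 = op (x 44) (x 40)

def Block (ain bin aout bout : V) (y : ℕ → V) : Prop :=
  ain = op (y 67) (y 48) ∧
  y 49 = op (y 48) (y 67) ∧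
  y 69 = op (y 68) (y 67) ∧
  aout = op (y 67) (y 68) ∧
  y 50 = op (y 49) (y 48) ∧
  y 48 = op (y 51) (y 50) ∧
  y 52 = op (y 50) (y 51) ∧
  y 51 = op (y 53) (y 52) ∧
  y 54 = op (y 52) (y 53) ∧
  y 53 = op (y 55) (y 54) ∧
  y 58 = op (y 56) (y 55) ∧
  y 61 = op (y 56) (y 54) ∧
  y 59 = op (y 57) (y 55) ∧
  y 60 = op (y 57) (y 54) ∧
  y 55 = op (y 62) (y 60) ∧
  y 54 = op (y 63) (y 60) ∧
  y 59 = op (y 62) (y 61) ∧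
  y 58 = op (y 63) (y 61) ∧
  bin = op (y 64) (y 58) ∧
  y 60 = op (y 64) (y 59) ∧
  y 66 = op (y 65) (y 58) ∧
  y 61 = op (y 65) (y 59) ∧
  y 70 = op (y 68) (y 69) ∧
  y 69 = op (y 71) (y 70) ∧
  y 72 = op (y 70) (y 71) ∧
  y 71 = op (y 73) (y 72) ∧
  y 74 = op (y 72) (y 73) ∧
  y 73 = op (y 75) (y 74) ∧
  y 78 = op (y 76) (y 75) ∧
  y 81 = op (y 76) (y 74) ∧
  y 79 = op (y 77) (y 75) ∧
  y 80 = op (y 77) (y 74) ∧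
  y 75 = op (y 82) (y 80) ∧
  y 74 = op (y 83) (y 80) ∧
  y 79 = op (y 82) (y 81) ∧
  y 78 = op (y 83) (y 81) ∧
  y 66 = op (y 84) (y 78) ∧
  y 80 = op (y 84) (y 79) ∧
  bout = op (y 85) (y 78) ∧
  y 81 = op (y 85) (y 79)

def LnSys (n : ℕ) (x : Fin 45 → V) (a b : ℕ → V) (y : ℕ → ℕ → V) : Prop :=
  L1Mod x (a 2) (b 2) ∧ a (n + 1) = x 2 ∧ b (n + 1) = x 26 ∧
    ∀ k : ℕ, 2 ≤ k → k ≤ n → Block (a k) (b k) (a (k + 1)) (b (k + 1)) (y k)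

def LnImage (n : ℕ) (x : Fin 45 → V) (a b : ℕ → V) (y : ℕ → ℕ → V) : Finset V :=
  Finset.image x Finset.univ ∪ (Finset.Icc 2 (n + 1)).image a ∪
    (Finset.Icc 2 (n + 1)).image b ∪
    ((Finset.Icc 2 n ×ˢ Finset.Icc 48 85).image fun q => y q.1 q.2)

/-! ### The symplectic form and the quandle operation -/

/-- The symplectic form on `V`. -/
def form (x y : V) : ZMod 5 := x 0 * y 1 - x 1 * y 0

instance : Fact (Nat.Prime 5) := ⟨by norm_num⟩

lemma op_def (x y : V) : op x y = x + form x y • y := rfl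

lemma form_self (x : V) : form x x = 0 := by simp only [form]; ring

lemma form_swap (x y : V) : form y x = -form x y := by simp only [form]; ring

lemma form_add_left (x y z : V) : form (x + y) z = form x z + form y z := by
  simp only [form, Pi.add_apply]; ring

lemma form_add_right (x y z : V) : form x (y + z) = form x y + form x z := by
  simp only [form, Pi.add_apply]; ring

lemma form_smul_left (c : ZMod 5) (x y : V) : form (c • x) y = c * form x y := by
  simp only [form, Pi.smul_apply, smul_eq_mul]; ring

lemma form_smul_right (c : ZMod 5) (x y : V) : form x (c • y) = c * form x y := by
  simp only [form, Pi.smul_apply, smul_eq_mul]; ring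

lemma op_of_form_eq_zero {x y : V} (h : form x y = 0) : op x y = x := by simp [op_def, h]

lemma form_eq_zero_of_op_eq {x y : V} (h : op x y = x) : form x y = 0 := by
  have h' : form x y • y = 0 := by simpa [op_def] using h
  rcases smul_eq_zero.1 h' with h0 | h0
  · exact h0
  · simp [h0, form]

/-- The inverse of the right translation `x ↦ op x y`. -/
def opInv (x y : V) : V := x - form x y • y

lemma opInv_def (x y : V) : opInv x y = x - form x y • y := rfl

lemma opInv_op (x y : V) : opInv (op x y) y = x := by
  simp only [opInv_def, op_def, form_add_left, form_smul_left, form_self]; module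

lemma op_opInv (x y : V) : op (opInv x y) y = x := by
  have h : form (opInv x y) y = form x y := by simp [opInv, form]; ring
  rw [op_def, h, opInv_def]; module

lemma eq_opInv {x y z : V} (h : z = op x y) : x = opInv z y := by rw [h, opInv_op]

/-- Two vectors orthogonal to a common nonzero vector are orthogonal to each other. -/
lemma form_eq_zero_trans {e x y : V} (he : e ≠ 0) (hx : form e x = 0) (hy : form e y = 0) :
    form x y = 0 := by
  have h0 : e 0 * form x y = 0 := by
    simp only [form] at *; linear_combination x 0 * hy - y 0 * hx
  have h1 : e 1 * form x y = 0 := by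
    simp only [form] at *; linear_combination x 1 * hy - y 1 * hx
  by_contra hne
  apply he
  ext i
  fin_cases i
  · simpa [hne] using h0
  · simpa [hne] using h1

/-- Orthogonal vectors lie on a common line. -/
lemma exists_collinear {u w : V} (h : form u w = 0) :
    ∃ (e : V) (l m : ZMod 5), u = l • e ∧ w = m • e := by
  by_cases hu : u = 0
  · exact ⟨w, 0, 1, by simp [hu], by simp⟩
  · have hc : u 0 ≠ 0 ∨ u 1 ≠ 0 := by
      by_contra! hc
      exact hu (by ext i; fin_cases i <;> simp [hc.1, hc.2])
    simp only [form] at h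
    rcases hc with hc | hc
    · refine ⟨u, 1, w 0 / u 0, by simp, ?_⟩
      ext i
      fin_cases i
      · simp [hc]
      · simp; field_simp; linear_combination h
    · refine ⟨u, 1, w 1 / u 1, by simp, ?_⟩
      ext i
      fin_cases i
      · simp; field_simp; linear_combination -h
      · simp [hc]

/-! ### Transvections -/

/-- The transvection `x ↦ op x y`, as a permutation of `V`. -/
def T (y : V) : Equiv.Perm V where
  toFun x := op x y
  invFun x := opInv x y
  left_inv x := opInv_op x y
  right_inv x := op_opInv x y

lemma T_apply (y x : V) : T y x = op x y := rfl

lemma T_inv_apply (y x : V) : (T y)⁻¹ x = opInv x y := rfl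

lemma op_op (v x y : V) : op (op v y) (op x y) = op (op v x) y := by
  simp only [op_def, form_add_left, form_smul_left, form_add_right, form_smul_right, form_self]
  rw [form_swap x y]
  module

lemma T_op (x y : V) : T (op x y) = T y * T x * (T y)⁻¹ := by
  rw [eq_mul_inv_iff_mul_eq]
  ext1 v
  exact op_op v x y

lemma T_of_eq {x y z : V} (h : z = op x y) : T z = T y * T x * (T y)⁻¹ := h ▸ T_op x y

/-- Scaling by a square root of `-1` inverts the transvection. -/
lemma T_smul {c : ZMod 5} (hc : c * c = -1) (x : V) : T (c • x) = (T x)⁻¹ := by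
  ext1 v
  rw [T_apply, T_inv_apply, op_def, opInv_def, form_smul_right, smul_smul,
    show c * form v x * c = -form v x by linear_combination form v x * hc]
  module

/-- Two successive crossings of an antiparallel twist region preserve the boundary word. -/
lemma twist {x y z w : V} (h₁ : z = op x y) (h₂ : y = op w z) :
    T w * (T z)⁻¹ = T y * (T x)⁻¹ := by
  have e₁ := T_of_eq h₁
  have e₂ := T_of_eq h₂
  have e₃ : T w = (T z)⁻¹ * T y * T z := by rw [e₂]; group
  rw [e₃, e₁]; group

/-! ### The recurring twelve-crossing tangle -/

/-- The twelve-crossing tangle occurring twice in the first link. The strands `u, w` enter, the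
strands `p, q` leave, and the other arguments are the colours of the internal arcs. -/
structure Tangle (u w s t x37 x38 x39 x40 x41 x42 x43 x44 p q : V) : Prop where
  h1 : x39 = op s w
  h2 : x37 = op s u
  h3 : x40 = op t w
  h4 : x38 = op t u
  h5 : w = op x41 x38
  h6 : u = op x42 x38
  h7 : x40 = op x41 x37
  h8 : x39 = op x42 x37
  h9 : p = op x43 x39
  h10 : x38 = op x43 x40
  h11 : q = op x44 x39
  h12 : x37 = op x44 x40

/-- The boundary word of the tangle is conserved. -/
lemma Tangle.word {u w s t x37 x38 x39 x40 x41 x42 x43 x44 p q : V}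
    (h : Tangle u w s t x37 x38 x39 x40 x41 x42 x43 x44 p q) :
    T q * (T p)⁻¹ = T u * (T w)⁻¹ := by
  have e1 := T_of_eq h.h1
  have e2 := T_of_eq h.h2
  have e3 := T_of_eq h.h3
  have e4 := T_of_eq h.h4
  have e5 := T_of_eq h.h5
  have e6 := T_of_eq h.h6
  have e7 := T_of_eq h.h7
  have e8 := T_of_eq h.h8
  have e9 := T_of_eq h.h9
  have e10 := T_of_eq h.h10
  have e11 := T_of_eq h.h11
  have e12 := T_of_eq h.h12
  -- The two words `P` and `Q` of the inner strands determine each other through `u, w`.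
  obtain ⟨P, hP⟩ : ∃ P, P = T x39 * (T x40)⁻¹ := ⟨_, rfl⟩
  obtain ⟨Q, hQ⟩ : ∃ Q, Q = T x37 * (T x38)⁻¹ := ⟨_, rfl⟩
  have k1 : P = Q * (T u * (T w)⁻¹) * Q⁻¹ := by
    have a : T x41 = (T x38)⁻¹ * T w * T x38 := by rw [e5]; group
    have b : T x42 = (T x38)⁻¹ * T u * T x38 := by rw [e6]; group
    rw [hP, hQ, e8, e7, a, b]; group
  have k2 : P = (T u * (T w)⁻¹)⁻¹ * Q * (T u * (T w)⁻¹) := by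
    rw [hP, hQ, e1, e2, e3, e4]; group
  have k3 : T q * (T p)⁻¹ = P * Q * P⁻¹ := by
    have a : T x43 = (T x40)⁻¹ * T x38 * T x40 := by rw [e10]; group
    have b : T x44 = (T x40)⁻¹ * T x37 * T x40 := by rw [e12]; group
    rw [hP, hQ, e11, e9, a, b]; group
  have k4 : P * Q = Q * (T u * (T w)⁻¹) := by rw [k1]; group
  have k5 : T u * (T w)⁻¹ * P = Q * (T u * (T w)⁻¹) := by rw [k2]; group
  rw [k3, k4, ← k5]; group

/-- If the incoming strands of the tangle are orthogonal, they pass through it unchanged up to a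
common sign. -/
lemma Tangle.collinear {u w s t x37 x38 x39 x40 x41 x42 x43 x44 p q : V}
    (h : Tangle u w s t x37 x38 x39 x40 x41 x42 x43 x44 p q) (huw : form u w = 0) :
    (p = w ∧ q = u) ∨ (p = -w ∧ q = -u) := by
  obtain ⟨h1, h2, h3, h4, h5, h6, h7, h8, h9, h10, h11, h12⟩ := h
  obtain ⟨e, l, m, rfl, rfl⟩ := exists_collinear huw
  have opInv_smul (c : ZMod 5) (x y : V) : opInv (c • x) y = c • opInv x y := by
    simp only [opInv_def, form_smul_left]; module
  have op_smul (c : ZMod 5) (x y : V) : op (c • x) y = c • op x y := by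
    simp only [op_def, form_smul_left]; module
  -- Each pair of parallel strands has the shape `(l • z, m • z)` for a common vector `z`.
  obtain ⟨g, hg⟩ : ∃ g, g = op (opInv e x38) x37 := ⟨_, rfl⟩
  have k40 : x40 = m • g := by rw [h7, eq_opInv h5, opInv_smul, op_smul, hg]
  have k39 : x39 = l • g := by rw [h8, eq_opInv h6, opInv_smul, op_smul, hg]
  obtain ⟨f, hf⟩ : ∃ f, f = opInv g (m • e) := ⟨_, rfl⟩
  have kt : t = m • f := by rw [eq_opInv h3, k40, opInv_smul, hf]
  have ks : s = l • f := by rw [eq_opInv h1, k39, opInv_smul, hf]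
  obtain ⟨F, hF⟩ : ∃ F, F = op f (l • e) := ⟨_, rfl⟩
  have k38 : x38 = m • F := by rw [h4, kt, op_smul, hF]
  have k37 : x37 = l • F := by rw [h2, ks, op_smul, hF]
  have kp : p = m • op (opInv F x40) x39 := by
    rw [h9, eq_opInv h10, k38, opInv_smul, op_smul]
  have kq : q = l • op (opInv F x40) x39 := by
    rw [h11, eq_opInv h12, k37, opInv_smul, op_smul]
  have mix (x y : V) : op (opInv x (m • y)) (l • y) = x + ((l * l - m * m) * form x y) • y := by
    simp only [op_def, opInv_def, sub_eq_add_neg, ← neg_smul, form_add_left, form_smul_left,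
      form_smul_right, form_self]
    module
  obtain ⟨σ, hσ⟩ : ∃ σ, σ = form e f := ⟨_, rfl⟩
  have hF' : F = f - (l * l * σ) • e := by
    rw [hF, op_def, form_smul_right, form_swap e f, ← hσ]; module
  have heF : form e F = σ := by
    rw [hF', sub_eq_add_neg, ← neg_smul, form_add_right, form_smul_right, form_self, hσ]; ring
  have hg' : g = e + ((l * l - m * m) * σ) • F := by rw [hg, k38, k37, mix, heF]
  have hgf : g = op f (m • e) := by rw [hf, op_opInv]
  have key : (1 + (m * m - l * l) * σ) • (f - (1 + l * l * σ) • e) = 0 := by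
    rw [hg', hF', op_def, form_smul_right, form_swap e f, ← hσ] at hgf
    linear_combination (norm := module) (-1 : ZMod 5) • hgf
  rw [k40, k39, mix] at kp kq
  rcases smul_eq_zero.1 key with h0 | h0
  · right
    have hFg : form F g = -σ := by
      rw [hg', form_add_right, form_smul_right, form_self, form_swap e F, heF]; ring
    have hgF : g = e + F := by
      rw [hg', show (l * l - m * m) * σ = 1 by linear_combination -h0, one_smul]
    have hG : F + ((l * l - m * m) * form F g) • g = -e := by
      rw [hFg, show (l * l - m * m) * -σ = -1 by linear_combination h0, hgF]; module
    rw [kp, kq, hG]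
    exact ⟨by module, by module⟩
  · left
    have hfe : f = (1 + l * l * σ) • e := sub_eq_zero.1 h0
    have hσ0 : σ = 0 := by rw [hσ, hfe, form_smul_right, form_self, mul_zero]
    have hFe : F = e := by rw [hF', hfe, hσ0]; module
    have hge : g = e := by rw [hg', hσ0]; module
    have hG : F + ((l * l - m * m) * form F g) • g = e := by
      rw [hFe, hge, form_self]; module
    rw [kp, kq, hG]
    exact ⟨rfl, rfl⟩

/-! ### The finite check -/

/-- The colour of arc `4` when arcs `0` and `2` are `(1, 0)` and `(0, d)`. -/
def v4 (d : ZMod 5) : V := ![d, d * (1 - d * d)]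

/-- The colour of arc `12` when arcs `0` and `2` are `(1, 0)` and `(0, d)`. -/
def v12 (d : ZMod 5) : V := ![1 + d * d + d * d * d * d, d * d * d * d]

/-- The colour of arc `9` as a function of those of arcs `5` and `6`. -/
def tw9 (x5 x6 : V) : V := opInv x6 (op (op x6 x5) x6)

/-- The colour of arc `10` as a function of those of arcs `5` and `6`. -/
def tw10 (x5 x6 : V) : V := op (op (op x6 x5) x6) (tw9 x5 x6)

set_option synthInstance.maxHeartbeats 400000 in
set_option synthInstance.maxSize 1000 in
/-- The crossings around the twist region of arcs `6` to `10`, in coordinates in which arcs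
`0` and `2` are `(1, 0)` and `(0, d)`, checked over all colours. -/
lemma core_coord : ∀ d : ZMod 5, d ≠ 0 → ∀ a b a6 b6 : ZMod 5,
    v4 d = op ![a, b] ![a6, b6] → ∀ a13 b13 : ZMod 5,
    (op (opInv (op ![1, 0] ![a, b]) (v12 d)) ![a13, b13] = op ![1, 0] (v4 d) ∧
    op (opInv (op ![0, d] ![a, b]) (v12 d)) ![a13, b13] = op ![0, d] (v4 d)) →
    tw9 ![a, b] ![a6, b6] = op (tw10 ![a, b] ![a6, b6]) (op ![a13, b13] (v12 d)) →
    form (v12 d) ![a13, b13] = 0 := by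
  decide +kernel

/-- The same check for arbitrary non-orthogonal `x0, x2`. The linear map sending `x0` and `x2` to
`(1, 0)` and `(0, form x0 x2)` preserves the form, hence the quandle operation. -/
lemma core {x0 x2 x4 x5 x6 x12 x13 : V} (hd : form x0 x2 ≠ 0)
    (h4 : x4 = (1 - form x0 x2 * form x0 x2) • x2 + form x0 x2 • x0)
    (h12 : x12 = (1 + form x0 x2 ^ 2 + form x0 x2 ^ 4) • x0 + form x0 x2 ^ 3 • x2)
    (h46 : x4 = op x5 x6)
    (e0 : op (opInv (op x0 x5) x12) x13 = op x0 x4)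
    (e2 : op (opInv (op x2 x5) x12) x13 = op x2 x4)
    (h9 : tw9 x5 x6 = op (tw10 x5 x6) (op x13 x12)) :
    form x12 x13 = 0 := by
  obtain ⟨d, hdd⟩ : ∃ d, d = form x0 x2 := ⟨_, rfl⟩
  rw [← hdd] at hd h4 h12
  obtain ⟨M, hM⟩ : ∃ M : V → V, ∀ x, M x = ![form x x2 / d, form x0 x] := ⟨_, fun _ => rfl⟩
  have Madd (x y : V) : M (x + y) = M x + M y := by
    simp only [hM, form_add_left, form_add_right]
    ext i; fin_cases i <;> simp; ring
  have Msmul (c : ZMod 5) (x : V) : M (c • x) = c • M x := by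
    simp only [hM, form_smul_left, form_smul_right]
    ext i; fin_cases i <;> simp; ring
  have Mform (x y : V) : form (M x) (M y) = form x y := by
    have h : form (M x) (M y) = (form x x2 * form x0 y - form x0 x * form y x2) / d := by
      simp only [hM, form, Matrix.cons_val_zero, Matrix.cons_val_one]; ring
    rw [h, div_eq_iff hd, hdd]
    simp only [form]; ring
  have Mop (x y : V) : M (op x y) = op (M x) (M y) := by
    rw [op_def, op_def, Madd, Msmul, Mform]
  have MopInv (x y : V) : M (opInv x y) = opInv (M x) (M y) := by
    rw [opInv_def, opInv_def, sub_eq_add_neg, ← neg_smul, Madd, Msmul, Mform]; module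
  have M0 : M x0 = ![1, 0] := by rw [hM, form_self, ← hdd, div_self hd]
  have M2 : M x2 = ![0, d] := by rw [hM, form_self, ← hdd, zero_div]
  have M4 : M x4 = v4 d := by
    rw [h4, Madd, Msmul, Msmul, M0, M2, v4]
    ext i; fin_cases i <;> simp; ring
  have M12 : M x12 = v12 d := by
    rw [h12, Madd, Msmul, Msmul, M0, M2, v12]
    ext i; fin_cases i <;> simp [-mul_eq_mul_right_iff] <;> ring
  have eta (v : V) : ![v 0, v 1] = v := by ext i; fin_cases i <;> rfl
  have main := core_coord d hd (M x5 0) (M x5 1) (M x6 0) (M x6 1)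
  rw [eta, eta, ← M0, ← M2, ← M4, ← M12] at main
  have main' := main (by rw [h46, Mop]) (M x13 0) (M x13 1)
  simp only [eta, tw9, tw10, ← Mop, ← MopInv, Mform] at main' h9
  exact main' ⟨by rw [e0], by rw [e2]⟩ (by rw [← h9])

/-! ### Solutions of the first system -/

/-- The arcs along which the block is inserted have orthogonal colours. If `x 0` and `x 2` are
orthogonal, this is immediate unless `x 0 = 0`, when the colour `0` spreads through both tangles
to `x 26`. Otherwise the colouring is excluded by the conservation laws and the finite check. -/
lemma form_x2_x26 {x : Fin 45 → V} (h : L1Sys x) : form (x 2) (x 26) = 0 := by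
  obtain ⟨h1, h2, h3, h4, h5, h6, h7, h8, h9, h10, h11, h12, h13, h14, h15, h16, h17, h18, h19,
    h20, h21, h22, h23, h24, h25, h26, h27, h28, h29, h30, h31, h32, h33, h34, h35, h36, h37, h38,
    h39, h40, h41, h42, h43, h44, h45⟩ := h
  have R1 : Tangle (x 33) (x 34) (x 35) (x 36) (x 37) (x 38) (x 39) (x 40) (x 41) (x 42) (x 43)
      (x 44) (x 24) (x 26) := ⟨h34, h35, h36, h37, h38, h39, h40, h41, h42, h43, h44, h45⟩
  have R2 : Tangle (x 12) (x 13) (x 14) (x 15) (x 21) (x 20) (x 18) (x 19) (x 16) (x 17) (x 22)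
      (x 23) (x 25) (x 24) := ⟨h16, h17, h18, h19, h20, h21, h22, h23, h26, h24, h27, h25⟩
  by_cases hd : form (x 0) (x 2) = 0
  · have hd' : form (x 2) (x 0) = 0 := by rw [form_swap, hd, neg_zero]
    have x1 : x 1 = x 0 := by
      rw [eq_opInv h3, opInv_def, hd, zero_smul, sub_zero]
    have x3 : x 3 = x 2 := by
      rw [eq_opInv h4, opInv_def, hd', zero_smul, sub_zero]
    have h025 : form (x 0) (x 25) = 0 := form_eq_zero_of_op_eq (by rw [← h1, x1])
    have x26 : x 26 = x 25 := by
      rw [eq_opInv h2, opInv_def, form_swap (x 0), h025, neg_zero, zero_smul, sub_zero]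
    by_cases hx0 : x 0 = 0
    · -- Through both tangles, colour `0` on arc `0` forces it on arcs `24`, `34`, `33` and `26`.
      have x12 : x 12 = 0 := by rw [h14, x3, x1, op_of_form_eq_zero hd, hx0]
      have x24 : x 24 = 0 := by
        rcases R2.collinear (by simp [x12, form]) with h | h <;> simp [h.2, x12]
      have hw := R1.word
      have T0 : T (0 : V) = 1 := by ext1 v; simp [T_apply, op_def]
      rw [x24, T0, inv_one, mul_one] at hw
      have k : form (x 33) (x 34) = 0 := by
        by_contra hk
        have a1 : op (x 34) (x 26) = op (x 34) (x 33) := by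
          have := congrArg (fun g : Equiv.Perm V => g (x 34)) hw
          simpa only [Equiv.Perm.mul_apply, T_apply, T_inv_apply, opInv_def, form_self, zero_smul,
            sub_zero] using this
        have a2 : op (x 33) (x 34) = opInv (x 33) (x 26) := by
          have hw' : T (x 34) = (T (x 26))⁻¹ * T (x 33) := by rw [hw]; group
          have := congrArg (fun g : Equiv.Perm V => g (x 33)) hw'
          simpa only [Equiv.Perm.mul_apply, T_apply, T_inv_apply,
            op_of_form_eq_zero (form_self (x 33))] using this
        have b1 : form (x 34) (x 26) • x 26 = form (x 34) (x 33) • x 33 := by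
          simpa [op_def] using a1
        have b2 : form (x 33) (x 34) • x 34 = -(form (x 33) (x 26) • x 26) := by
          simpa [op_def, opInv_def, sub_eq_add_neg] using a2
        have c2 := congrArg (form (x 26)) b2
        rw [← neg_smul, form_smul_right, form_smul_right, form_self, mul_zero] at c2
        have c1 := congrArg (form (x 26)) b1
        rw [form_smul_right, form_smul_right, form_self, mul_zero, form_swap (x 33) (x 34)] at c1
        have d2 : form (x 26) (x 34) = 0 := by simpa [hk] using c2
        have d1 : form (x 26) (x 33) = 0 := by simpa [hk] using c1.symm
        by_cases h26 : x 26 = 0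
        · rw [h26, smul_zero, form_swap (x 33)] at b1
          have : x 33 = 0 := by simpa [hk] using b1.symm
          exact hk (by simp [this, form])
        · exact hk (form_eq_zero_trans h26 d1 d2)
      have op0 (y : V) : op 0 y = 0 := by simp [op_def, form]
      have op0' (y : V) : op y 0 = y := by simp [op_def]
      have x34 : x 34 = 0 := by
        rcases R1.collinear k with h | h
        · rw [← h.1, x24]
        · rw [← neg_neg (x 34), ← h.1, x24, neg_zero]
      rw [x34, op0] at h33
      rw [h33, op0'] at h32
      rw [h33, op0] at h31
      rw [h31, op0'] at h30
      rw [h31, op0] at h29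
      rw [h29, op0'] at h28
      have x27 : x 27 = 0 := by rw [eq_opInv h8, h29]; simp [opInv_def, form]
      have x33 : x 33 = 0 := by rw [h32, h30, h28, x27]
      have x26 : x 26 = 0 := by
        rcases R1.collinear k with h | h <;> simp [h.2, x33]
      simp [x26, form]
    · rw [x26]
      exact form_eq_zero_trans hx0 hd h025
  · exfalso
    obtain ⟨d, hdd⟩ : ∃ d, d = form (x 0) (x 2) := ⟨_, rfl⟩
    have hd0 : d ≠ 0 := by rwa [hdd]
    have hs : form (x 2) (x 0) = -d := by rw [form_swap, hdd]
    have x1 : x 1 = x 0 - d • x 2 := by rw [eq_opInv h3, opInv_def, hdd]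
    have x3 : x 3 = x 2 + d • x 0 := by rw [eq_opInv h4, opInv_def, hs]; module
    have x4 : x 4 = (1 - d * d) • x 2 + d • x 0 := by
      rw [eq_opInv h5, opInv_def, x3, form_add_left, form_smul_left, form_self, ← hdd]; module
    have x12 : x 12 = (1 + d ^ 2 + d ^ 4) • x 0 + d ^ 3 • x 2 := by
      rw [h14, op_def, x3, x1, sub_eq_add_neg, ← neg_smul]
      simp only [form_add_left, form_smul_left, form_add_right, form_smul_right, form_self, ← hdd,
        hs]
      module
    -- Since `op (x 0) (x 25) = x 0 - d • x 2`, arc `25` is `x 2` times a square root of `-1`.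
    obtain ⟨c, hc, x25⟩ : ∃ c : ZMod 5, c * c = -1 ∧ x 25 = c • x 2 := by
      have k : form (x 0) (x 25) • x 25 = -(d • x 2) := by
        have := h1; rw [x1, op_def, sub_eq_add_neg] at this
        exact (add_left_cancel this).symm
      obtain ⟨r, hr⟩ : ∃ r, r = form (x 0) (x 25) := ⟨_, rfl⟩
      have k2 := congrArg (form (x 0)) k
      rw [← neg_smul, form_smul_right, form_smul_right, ← hdd, ← hr] at k2
      have hr0 : r ≠ 0 := by
        rintro rfl
        rw [mul_zero, eq_comm] at k2
        simp [hd0] at k2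
      refine ⟨-d / r, ?_, ?_⟩
      · field_simp; linear_combination k2
      · rw [← hr] at k
        rw [div_eq_inv_mul, mul_smul, neg_smul, ← k, smul_smul, inv_mul_cancel₀ hr0, one_smul]
    have t25 : T (x 25) = (T (x 2))⁻¹ := by rw [x25, T_smul hc]
    have w1 := R1.word
    have w2 := R2.word
    have tw : T (x 33) * (T (x 34))⁻¹ = T (x 2) * (T (x 5))⁻¹ := by
      have a := (twist h32 h33).trans ((twist h30 h31).trans (twist h28 h29))
      have b := congrArg (·⁻¹) a
      simp only [mul_inv_rev, inv_inv] at b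
      rw [b, T_of_eq h8, T_of_eq h9]; group
    -- The two boundary words combine to express the transvection of arc `13`.
    have t13 : T (x 13) * (T (x 12))⁻¹ * T (x 5) = T (x 4) := by
      have t26 : T (x 26) = (T (x 0))⁻¹ * T (x 25) * T (x 0) := by rw [T_of_eq h2]; group
      have t3 : T (x 3) = (T (x 0))⁻¹ * T (x 2) * T (x 0) := by rw [T_of_eq h4]; group
      have t4 : T (x 4) = (T (x 2))⁻¹ * T (x 3) * T (x 2) := by rw [T_of_eq h5]; group
      have t24 : (T (x 24))⁻¹ = (T (x 26))⁻¹ * (T (x 2) * (T (x 5))⁻¹) := by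
        rw [← tw, ← w1]; group
      have b := congrArg (·⁻¹) w2
      simp only [mul_inv_rev, inv_inv] at b
      rw [← b, t24, t4, t3, t26, t25]; group
    have e (v : V) : op (opInv (op v (x 5)) (x 12)) (x 13) = op v (x 4) :=
      congrArg (fun g : Equiv.Perm V => g v) t13
    have x9 : x 9 = tw9 (x 5) (x 6) := by rw [tw9, ← h7, ← h10, ← eq_opInv h11]
    have x10 : x 10 = tw10 (x 5) (x 6) := by rw [tw10, ← x9, ← h7, ← h10, ← h12]
    have k : form (x 12) (x 13) = 0 := by
      refine core (x0 := x 0) (x2 := x 2) (x5 := x 5) hd (hdd ▸ x4) (hdd ▸ x12) h6 (e _) (e _) ?_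
      rw [← x9, ← x10, ← h15]; exact h13
    have k' : form (x 12) (x 25) = 0 := by
      rcases R2.collinear k with h | h
      · rw [h.1, k]
      · rw [h.1, ← neg_one_smul (ZMod 5), form_smul_right, k, mul_zero]
    rw [x25, form_smul_right, x12, form_add_left, form_smul_left, form_smul_left, form_self,
      ← hdd] at k'
    have hfin : ∀ c d : ZMod 5, c * c = -1 →
        c * ((1 + d ^ 2 + d ^ 4) * d + d ^ 3 * 0) = 0 → d = 0 := by decide
    exact hd0 (hfin c d hc k')

theorem l1_solution_extends_to_ln (n : ℕ) (hn : 1 ≤ n)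
    (x1 : Fin 45 → V) (h1 : L1Sys x1) :
    ∃ (x : Fin 45 → V) (a b : ℕ → V) (y : ℕ → ℕ → V),
      LnSys n x a b y ∧ LnImage n x a b y = Finset.image x1 Finset.univ := by
  -- The block is coloured by `x 26`, except for its arc `67`, which is coloured by `x 2`.
  refine ⟨x1, fun _ => x1 2, fun _ => x1 26, fun _ j => if j = 67 then x1 2 else x1 26,
    ⟨h1, rfl, rfl, fun k _ _ => ?_⟩, ?_⟩
  · have h := form_x2_x26 h1
    have h' : form (x1 26) (x1 2) = 0 := by rw [form_swap, h, neg_zero]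
    simp [Block, op_of_form_eq_zero h, op_of_form_eq_zero h',
      op_of_form_eq_zero (form_self (x1 26))]
  · have m2 : x1 2 ∈ Finset.image x1 Finset.univ := Finset.mem_image_of_mem _ (Finset.mem_univ _)
    have m26 : x1 26 ∈ Finset.image x1 Finset.univ := Finset.mem_image_of_mem _ (Finset.mem_univ _)
    apply Finset.Subset.antisymm
    · refine Finset.union_subset (Finset.union_subset (Finset.union_subset subset_rfl ?_) ?_) ?_
      · exact Finset.image_subset_iff.2 fun _ _ => m2
      · exact Finset.image_subset_iff.2 fun _ _ => m26
      · refine Finset.image_subset_iff.2 fun q _ => ?_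
        dsimp only
        split_ifs
        exacts [m2, m26]
    · intro v hv
      simp only [LnImage, Finset.mem_union]
      exact Or.inl (Or.inl (Or.inl hv))
end
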